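/- There exists a sequence s : ℕ → ℚ such that s is computable (Computable s, using the Primcodable structure on ℚ), s is strictly increasing, 0 ≤ s n ≤ 1 for all n, and the supremum L = ⨆ n, ((s n : ℝ)) is not a computable real number in the following sense: for every computable sequence q : ℕ → ℚ it is not the case that |(q n : ℝ) - L| ≤ 2^(-(n : ℤ)) for all n. -/

import Mathlib

/-!
The halting set is enumerated in stages, and the `n`-th term of the sequence is
`∑ c < n, 2 ^ (-e c)`, where `e c` is `c + 1` if `c` is enumerated by stage `n` and `c + 2` if not.
A late enumeration of `c` raises the later terms by at least `2 ^ (-(c + 2))`. Were the supremum a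
computable real, a search would find, for each `c`, a term that close to it, and from that stage on
`c` can no longer be enumerated, so the halting problem would be decidable.

Mathlib numbers `ℚ` by the rank of the code of the reduced fraction among all such codes.
Numerators and denominators are computable because this set of codes is decidable, so the code of a
given rank can be searched for.
-/

open Encodable Finset
open Nat.Partrec (Code)

section Computability

variable {α β : Type*} [Primcodable α] [Primcodable β]

theorem computablePred_and {p q : α → Prop} (hp : ComputablePred p) (hq : ComputablePred q) :
    ComputablePred fun a => p a ∧ q a := by
  classical
  exact ((Primrec.and.to_comp.comp hp.decide hq.decide).of_eq
    fun a => (Bool.decide_and (p a) (q a)).symm).computablePred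

theorem computablePred_comp {p : β → Prop} {f : α → β} (hp : ComputablePred p)
    (hf : Computable f) : ComputablePred fun a => p (f a) := by
  classical
  exact (hp.decide.comp hf).computablePred

theorem computable_nat_add {f g : α → ℕ} (hf : Computable f) (hg : Computable g) :
    Computable fun a => f a + g a :=
  Primrec.nat_add.to_comp.comp hf hg

theorem computable_nat_mul {f g : α → ℕ} (hf : Computable f) (hg : Computable g) :
    Computable fun a => f a * g a :=
  Primrec.nat_mul.to_comp.comp hf hg

theorem computablePred_natEq {f g : α → ℕ} (hf : Computable f) (hg : Computable g) :
    ComputablePred fun a => f a = g a :=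
  computablePred_comp Primrec.eq.computablePred (hf.pair hg)

theorem computablePred_natLt {f g : α → ℕ} (hf : Computable f) (hg : Computable g) :
    ComputablePred fun a => f a < g a :=
  computablePred_comp Primrec.nat_lt.computablePred (hf.pair hg)

theorem computable_of_computablePred_graph {γ : Type*} [Denumerable γ] {f : α → γ}
    (hf : ComputablePred fun x : α × γ => f x.1 = x.2) : Computable f := by
  classical
  have hsearch : ComputablePred fun x : α × ℕ => f x.1 = Denumerable.ofNat γ x.2 :=
    computablePred_comp hf (Computable.fst.pair ((Computable.ofNat γ).comp Computable.snd))
  have hex (a : α) : ∃ n, f a = Denumerable.ofNat γ n :=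
    ⟨encode (f a), (Denumerable.ofNat_encode (f a)).symm⟩
  exact ((Computable.ofNat γ).comp (Computable.find hsearch hex)).of_eq
    fun a => (Nat.find_spec (hex a)).symm

theorem computable_nat_count {p : ℕ → Prop} [DecidablePred p] (hp : ComputablePred p) :
    Computable (Nat.count p) := by
  have hstep : Computable₂ fun (_ : ℕ) (x : ℕ × ℕ) => bif decide (p x.1) then x.2 + 1 else x.2 :=
    .cond (hp.decide.comp (Computable.fst.comp Computable.snd))
      (Computable.succ.comp (Computable.snd.comp Computable.snd))
      (Computable.snd.comp Computable.snd)
  refine (Computable.nat_rec .id (.const 0) hstep).of_eq fun n => ?_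
  induction n with
  | zero => rfl
  | succ n ih =>
    rw [Nat.count_succ, ← ih]
    by_cases hn : p n <;> simp [hn]

theorem primrec₂_nat_gcd : Primrec₂ Nat.gcd := by
  have hdvd : PrimrecRel fun k n : ℕ => k ∣ n :=
    PrimrecPred.of_eq (p := fun x : ℕ × ℕ => x.2 % x.1 = 0)
      (Primrec.eq.comp (Primrec.nat_mod.comp .snd .fst) (.const 0))
      fun _ => Nat.dvd_iff_mod_eq_zero.symm
  have hcommon : PrimrecRel fun (x : ℕ × ℕ) k => k ∣ x.1 ∧ k ∣ x.2 :=
    (hdvd.comp .snd (Primrec.fst.comp .fst)).and (hdvd.comp .snd (Primrec.snd.comp .fst))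
  refine (Primrec.nat_findGreatest (Primrec.nat_add.comp .fst .snd) hcommon).of_eq
    fun ⟨m, n⟩ => Nat.findGreatest_eq_iff.2
      ⟨?_, fun _ => ⟨Nat.gcd_dvd_left m n, Nat.gcd_dvd_right m n⟩, fun k hlt hle hk => ?_⟩
  · rcases m.eq_zero_or_pos with rfl | hm
    · simp
    · exact (Nat.gcd_le_left n hm).trans (Nat.le_add_right m n)
  · have hpos : 0 < m.gcd n := Nat.gcd_pos_iff.2 (by omega)
    exact (Nat.le_of_dvd hpos (Nat.dvd_gcd hk.1 hk.2)).not_gt hlt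

theorem primrec_int_natAbs : Primrec Int.natAbs :=
  (Primrec.nat_div2.comp (Primrec.succ.comp .encode)).of_eq fun z => by
    rcases z with n | n
    · change Nat.div2 (2 * n + 1) = n
      grind
    · change Nat.div2 (2 * n + 1 + 1) = n + 1
      grind

theorem primrec_int_toNat : Primrec Int.toNat :=
  (Primrec.cond (Primrec.nat_bodd.comp .encode) (.const 0)
    (Primrec.nat_div2.comp .encode)).of_eq fun z => by
    rcases z with n | n
    · change (bif Nat.bodd (2 * n) then 0 else Nat.div2 (2 * n)) = n
      simp
    · change (bif Nat.bodd (2 * n + 1) then 0 else Nat.div2 (2 * n + 1)) = 0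
      simp

theorem primrec_int_toNat_neg : Primrec fun z : ℤ => (-z).toNat :=
  (Primrec.nat_sub.comp primrec_int_natAbs primrec_int_toNat).of_eq fun z => by
    have := z.toNat_add_toNat_neg_eq_natAbs
    omega

end Computability

section OfEncodableOfInfinite

variable {α : Type*} [Encodable α] [Infinite α]

theorem encode_ofEncodableOfInfinite [DecidablePred (· ∈ Set.range (encode : α → ℕ))] (a : α) :
    @encode α (Denumerable.ofEncodableOfInfinite α).toEncodable a =
      Nat.count (· ∈ Set.range (encode : α → ℕ)) (encode a) := by
  rw [Nat.count]
  change @List.countP _ (fun x => @decide (x ∈ Set.range encode) (decidableRangeEncode α x))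
    (List.range (encode a)) = _
  congr!

theorem computable_encode_ofEncodableOfInfinite
    (h : ComputablePred (· ∈ Set.range (encode : α → ℕ))) :
    @Computable α ℕ (@Primcodable.ofDenumerable α (Denumerable.ofEncodableOfInfinite α)) _
      encode := by
  classical
  let index : Denumerable α := Denumerable.ofEncodableOfInfinite α
  have hgraph : ComputablePred fun x : α × ℕ => x.2 ∈ Set.range (encode : α → ℕ) ∧
      Nat.count (· ∈ Set.range (encode : α → ℕ)) x.2 = @encode α index.toEncodable x.1 :=
    computablePred_and (computablePred_comp h .snd) (computablePred_natEq
      ((computable_nat_count h).comp .snd) (Computable.encode.comp .fst))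
  refine computable_of_computablePred_graph (hgraph.of_eq fun ⟨a, n⟩ => ?_)
  dsimp only
  rw [encode_ofEncodableOfInfinite]
  constructor
  · rintro ⟨hn, hcount⟩
    exact (Nat.count_injective hn (Set.mem_range_self a) hcount).symm
  · rintro rfl
    exact ⟨Set.mem_range_self a, rfl⟩

end OfEncodableOfInfinite

section Rat

/-- The code of a rational number given by `Rat.instEncodable`: its reduced numerator and
denominator. The encoding underlying `Primcodable ℚ` is the rank of this code among all of them. -/
def ratCode (q : ℚ) : ℕ :=
  Nat.pair (encode q.num) q.den

theorem mem_range_ratCode {n : ℕ} : n ∈ Set.range ratCode ↔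
    n.unpair.2 ≠ 0 ∧ (Denumerable.ofNat ℤ n.unpair.1).natAbs.gcd n.unpair.2 = 1 := by
  constructor
  · rintro ⟨q, rfl⟩
    simp only [ratCode, Nat.unpair_pair, Denumerable.ofNat_encode]
    exact ⟨q.den_nz, q.reduced⟩
  · rintro ⟨hden, hcoprime⟩
    exact ⟨⟨_, _, hden, hcoprime⟩, by
      simp only [ratCode, Denumerable.encode_ofNat, Nat.pair_unpair]⟩

theorem primrecPred_mem_range_ratCode : PrimrecPred (· ∈ Set.range ratCode) := by
  have hnum : Primrec fun n : ℕ => (Denumerable.ofNat ℤ n.unpair.1).natAbs :=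
    primrec_int_natAbs.comp ((Primrec.ofNat ℤ).comp (Primrec.fst.comp .unpair))
  have hden : Primrec fun n : ℕ => n.unpair.2 := Primrec.snd.comp .unpair
  exact ((Primrec.eq.comp hden (.const 0)).not.and
    (Primrec.eq.comp (primrec₂_nat_gcd.comp hnum hden) (.const 1))).of_eq
    fun _ => mem_range_ratCode.symm

theorem computable_ratCode : Computable ratCode :=
  @computable_encode_ofEncodableOfInfinite ℚ Rat.instEncodable _
    primrecPred_mem_range_ratCode.computablePred

theorem computable_rat_num : Computable Rat.num :=
  ((Computable.ofNat ℤ).comp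
    (Computable.fst.comp (Computable.unpair.comp computable_ratCode))).of_eq fun q => by
      simp only [ratCode, Nat.unpair_pair, Denumerable.ofNat_encode]

theorem computable_rat_den : Computable Rat.den :=
  (Computable.snd.comp (Computable.unpair.comp computable_ratCode)).of_eq
    fun q => by simp [ratCode]

variable {α : Type*} [Primcodable α]

theorem rat_eq_toNat_sub_toNat_div (q : ℚ) :
    q = (q.num.toNat - (-q.num).toNat) / q.den := by
  have hnum : (q.num.toNat - (-q.num).toNat : ℚ) = q.num :=
    mod_cast congrArg (Int.cast (R := ℚ)) q.num.toNat_sub_toNat_neg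
  rw [hnum, Rat.num_div_den]

theorem computable_rat_iff {f : α → ℚ} :
    Computable f ↔ ∃ a b d : α → ℕ, Computable a ∧ Computable b ∧ Computable d ∧
      (∀ x, d x ≠ 0) ∧ ∀ x, f x = ((a x : ℚ) - b x) / d x := by
  have hpos : Computable fun q : ℚ => q.num.toNat :=
    primrec_int_toNat.to_comp.comp computable_rat_num
  have hneg : Computable fun q : ℚ => (-q.num).toNat :=
    primrec_int_toNat_neg.to_comp.comp computable_rat_num
  refine ⟨fun hf => ⟨_, _, _, hpos.comp hf, hneg.comp hf, computable_rat_den.comp hf,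
    fun x => (f x).den_nz, fun x => rat_eq_toNat_sub_toNat_div (f x)⟩, ?_⟩
  rintro ⟨a, b, d, ha, hb, hd, hd0, hf⟩
  -- No fraction is reduced: the value is searched for among all rationals by cross-multiplication,
  -- arranged so that no subtraction occurs in `ℕ`.
  have hcross : ComputablePred fun x : α × ℚ =>
      a x.1 * x.2.den + (-x.2.num).toNat * d x.1 = x.2.num.toNat * d x.1 + b x.1 * x.2.den :=
    computablePred_natEq
      (computable_nat_add (computable_nat_mul (ha.comp .fst) (computable_rat_den.comp .snd))
        (computable_nat_mul (hneg.comp .snd) (hd.comp .fst)))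
      (computable_nat_add (computable_nat_mul (hpos.comp .snd) (hd.comp .fst))
        (computable_nat_mul (hb.comp .fst) (computable_rat_den.comp .snd)))
  refine computable_of_computablePred_graph (hcross.of_eq fun ⟨x, q⟩ => ?_)
  have hdx : (d x : ℚ) ≠ 0 := Nat.cast_ne_zero.2 (hd0 x)
  have hden : (q.den : ℚ) ≠ 0 := Nat.cast_ne_zero.2 q.den_nz
  conv_rhs => rw [hf, rat_eq_toNat_sub_toNat_div q]
  rw [div_eq_div_iff hdx hden, ← Nat.cast_inj (R := ℚ)]
  push_cast
  constructor <;> intro h <;> linear_combination h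

theorem computable_rat_add {f g : α → ℚ} (hf : Computable f) (hg : Computable g) :
    Computable fun x => f x + g x := by
  obtain ⟨a, b, d, ha, hb, hd, hd0, hf⟩ := computable_rat_iff.1 hf
  obtain ⟨a', b', d', ha', hb', hd', hd0', hg⟩ := computable_rat_iff.1 hg
  refine computable_rat_iff.2 ⟨_, _, _,
    computable_nat_add (computable_nat_mul ha hd') (computable_nat_mul ha' hd),
    computable_nat_add (computable_nat_mul hb hd') (computable_nat_mul hb' hd),
    computable_nat_mul hd hd', fun x => mul_ne_zero (hd0 x) (hd0' x), fun x => ?_⟩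
  have hdx : (d x : ℚ) ≠ 0 := Nat.cast_ne_zero.2 (hd0 x)
  have hdx' : (d' x : ℚ) ≠ 0 := Nat.cast_ne_zero.2 (hd0' x)
  rw [hf, hg, div_add_div _ _ hdx hdx']
  push_cast
  ring

theorem computable_rat_mul {f g : α → ℚ} (hf : Computable f) (hg : Computable g) :
    Computable fun x => f x * g x := by
  obtain ⟨a, b, d, ha, hb, hd, hd0, hf⟩ := computable_rat_iff.1 hf
  obtain ⟨a', b', d', ha', hb', hd', hd0', hg⟩ := computable_rat_iff.1 hg
  refine computable_rat_iff.2 ⟨_, _, _,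
    computable_nat_add (computable_nat_mul ha ha') (computable_nat_mul hb hb'),
    computable_nat_add (computable_nat_mul ha hb') (computable_nat_mul hb ha'),
    computable_nat_mul hd hd', fun x => mul_ne_zero (hd0 x) (hd0' x), fun x => ?_⟩
  rw [hf, hg, div_mul_div_comm]
  push_cast
  ring

theorem computablePred_rat_lt {f g : α → ℚ} (hf : Computable f) (hg : Computable g) :
    ComputablePred fun x => f x < g x := by
  obtain ⟨a, b, d, ha, hb, hd, hd0, hf⟩ := computable_rat_iff.1 hf
  obtain ⟨a', b', d', ha', hb', hd', hd0', hg⟩ := computable_rat_iff.1 hg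
  refine (computablePred_natLt
    (computable_nat_add (computable_nat_mul ha hd') (computable_nat_mul hb' hd))
    (computable_nat_add (computable_nat_mul ha' hd) (computable_nat_mul hb hd'))).of_eq
    fun x => ?_
  have hdx : (0 : ℚ) < d x := Nat.cast_pos.2 (Nat.pos_of_ne_zero (hd0 x))
  have hdx' : (0 : ℚ) < d' x := Nat.cast_pos.2 (Nat.pos_of_ne_zero (hd0' x))
  rw [hf, hg, div_lt_div_iff₀ hdx hdx', ← Nat.cast_lt (α := ℚ)]
  push_cast
  constructor <;> intro h <;> linarith

theorem computable_rat_sum_range {f : α → ℕ → ℚ} {g : α → ℕ} (hf : Computable₂ f)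
    (hg : Computable g) : Computable fun x => ∑ i ∈ range (g x), f x i := by
  have hstep : Computable₂ fun (x : α) (p : ℕ × ℚ) => p.2 + f x p.1 :=
    computable_rat_add (Computable.snd.comp .snd)
      (hf.comp .fst (Computable.fst.comp .snd))
  refine (Computable.nat_rec hg (.const 0) hstep).of_eq fun x => ?_
  induction g x with
  | zero => rfl
  | succ n ih => rw [sum_range_succ, ← ih]

theorem computable_rat_pow {f : α → ℚ} {g : α → ℕ} (hf : Computable f) (hg : Computable g) :
    Computable fun x => f x ^ g x := by
  have hstep : Computable₂ fun (x : α) (p : ℕ × ℚ) => p.2 * f x :=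
    computable_rat_mul (Computable.snd.comp .snd) (hf.comp .fst)
  refine (Computable.nat_rec hg (.const 1) hstep).of_eq fun x => ?_
  induction g x with
  | zero => exact (pow_zero (f x)).symm
  | succ n ih => rw [pow_succ, ← ih]

end Rat

/-- A real number is computable if some computable sequence of rationals approximates it with
precision `2 ^ (-n)` at place `n`. -/
def IsComputableReal (x : ℝ) : Prop :=
  ∃ q : ℕ → ℚ, Computable q ∧ ∀ n : ℕ, |(q n : ℝ) - x| ≤ 2 ^ (-(n : ℤ))

theorem exists_computable_modulus {s : ℕ → ℚ} {x : ℝ} (hs : Computable s)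
    (hx : IsLUB (Set.range fun n => (s n : ℝ)) x) (hcomp : IsComputableReal x) :
    ∃ N : ℕ → ℕ, Computable N ∧ ∀ k, x < s (N k) + (1 / 2) ^ k := by
  obtain ⟨q, hq, hqx⟩ := hcomp
  have happrox (n : ℕ) : x - (1 / 2) ^ n ≤ q n ∧ q n ≤ x + (1 / 2) ^ n := by
    have := hqx n
    rw [zpow_neg, zpow_natCast, ← inv_pow, ← one_div, abs_sub_le_iff] at this
    constructor <;> linarith
  have hsearch : ComputablePred fun p : ℕ × ℕ => q (p.1 + 2) < s p.2 + (1 / 2) ^ (p.1 + 1) :=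
    computablePred_rat_lt (hq.comp (Computable.succ.comp (Computable.succ.comp .fst)))
      (computable_rat_add (hs.comp .snd)
        (computable_rat_pow (.const _) (Computable.succ.comp .fst)))
  have hex (k : ℕ) : ∃ n, q (k + 2) < s n + (1 / 2) ^ (k + 1) := by
    have hpos : (0 : ℝ) < (1 / 2) ^ (k + 2) := by positivity
    obtain ⟨_, ⟨n, rfl⟩, hn⟩ := (lt_isLUB_iff hx).1 (sub_lt_self x hpos)
    refine ⟨n, (Rat.cast_lt (K := ℝ)).1 ?_⟩
    push_cast
    linarith [happrox (k + 2), pow_succ (1 / 2 : ℝ) (k + 1)]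
  refine ⟨_, Computable.find hsearch hex, fun k => ?_⟩
  have hfind := (Rat.cast_lt (K := ℝ)).2 (Nat.find_spec (hex k))
  have hhalf : (0 : ℝ) < (1 / 2) ^ k := by positivity
  push_cast at hfind
  linarith [happrox (k + 2), pow_succ (1 / 2 : ℝ) (k + 1), pow_succ (1 / 2 : ℝ) k]

section Specker

variable {H : ℕ → ℕ → Bool}

/-- The contribution of `c` to `speckerSeq H n`. It doubles once `c` is enumerated, and is positive
before that so that `speckerSeq H` increases strictly. -/
def speckerTerm (H : ℕ → ℕ → Bool) (n c : ℕ) : ℚ :=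
  (1 / 2) ^ (bif H n c then c + 1 else c + 2)

/-- The Specker sequence of an enumeration by stages, where `H n c` says that `c` has been
enumerated by stage `n`. -/
def speckerSeq (H : ℕ → ℕ → Bool) (n : ℕ) : ℚ :=
  ∑ c ∈ range n, speckerTerm H n c

theorem computable_speckerSeq (hH : Computable₂ H) : Computable (speckerSeq H) :=
  computable_rat_sum_range (computable_rat_pow (.const _) (.cond hH (Computable.succ.comp .snd)
    (Computable.succ.comp (Computable.succ.comp .snd)))) .id

theorem speckerTerm_pos (n c : ℕ) : 0 < speckerTerm H n c := by
  unfold speckerTerm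
  positivity

theorem speckerTerm_le (n c : ℕ) : speckerTerm H n c ≤ (1 / 2) ^ (c + 1) :=
  pow_le_pow_of_le_one (by norm_num) (by norm_num) (by cases H n c <;> simp)

theorem monotone_speckerTerm (hH : ∀ c, Monotone (H · c)) (c : ℕ) :
    Monotone (speckerTerm H · c) := by
  refine fun m n hmn => pow_le_pow_of_le_one (by norm_num) (by norm_num) ?_
  have himp : H m c = true → H n c = true := Bool.le_iff_imp.1 (hH c hmn)
  cases hm : H m c <;> cases hn : H n c <;> simp_all

theorem speckerSeq_nonneg (n : ℕ) : 0 ≤ speckerSeq H n :=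
  sum_nonneg fun c _ => (speckerTerm_pos n c).le

theorem speckerSeq_le_one (n : ℕ) : speckerSeq H n ≤ 1 :=
  calc
    speckerSeq H n ≤ ∑ c ∈ range n, (1 / 2 : ℚ) ^ (c + 1) :=
      sum_le_sum fun c _ => speckerTerm_le n c
    _ = 1 - (1 / 2) ^ n := by
      simp only [pow_succ, ← sum_mul]
      linarith [geom_sum_mul_neg (1 / 2 : ℚ) n]
    _ ≤ 1 := sub_le_self 1 (by positivity)

theorem strictMono_speckerSeq (hH : ∀ c, Monotone (H · c)) : StrictMono (speckerSeq H) :=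
  strictMono_nat_of_lt_succ fun n =>
    calc
      speckerSeq H n ≤ ∑ c ∈ range n, speckerTerm H (n + 1) c :=
        sum_le_sum fun c _ => monotone_speckerTerm hH c n.le_succ
      _ < ∑ c ∈ range n, speckerTerm H (n + 1) c + speckerTerm H (n + 1) n :=
        lt_add_of_pos_right _ (speckerTerm_pos (n + 1) n)
      _ = speckerSeq H (n + 1) := (sum_range_succ _ n).symm

theorem speckerSeq_add_le (hH : ∀ c, Monotone (H · c)) {m n c : ℕ} (hmn : m ≤ n) (hc : c < m)
    (hm : H m c = false) (hn : H n c = true) :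
    speckerSeq H m + (1 / 2) ^ (c + 2) ≤ speckerSeq H n := by
  have hjump : speckerTerm H n c - speckerTerm H m c = (1 / 2) ^ (c + 2) := by
    simp only [speckerTerm, hm, hn, cond_true, cond_false]
    ring
  have hsum : speckerTerm H n c - speckerTerm H m c ≤
      ∑ i ∈ range m, (speckerTerm H n i - speckerTerm H m i) :=
    single_le_sum (f := fun i => speckerTerm H n i - speckerTerm H m i)
      (fun i _ => sub_nonneg.2 (monotone_speckerTerm hH i hmn)) (mem_range.2 hc)
  rw [hjump, sum_sub_distrib] at hsum
  calc
    speckerSeq H m + (1 / 2) ^ (c + 2) ≤ ∑ i ∈ range m, speckerTerm H n i := by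
      unfold speckerSeq
      linarith
    _ ≤ speckerSeq H n := sum_le_sum_of_subset_of_nonneg (range_mono hmn)
      fun i _ _ => (speckerTerm_pos n i).le

theorem isLUB_iSup_speckerSeq :
    IsLUB (Set.range fun n => (speckerSeq H n : ℝ)) (⨆ n, (speckerSeq H n : ℝ)) :=
  isLUB_ciSup ⟨1, Set.forall_mem_range.2 fun n => mod_cast speckerSeq_le_one n⟩

theorem exists_eq_true_iff_of_lt_speckerSeq_add (hH : ∀ c, Monotone (H · c)) {x : ℝ}
    (hx : x ∈ upperBounds (Set.range fun n => (speckerSeq H n : ℝ))) {m c : ℕ} (hc : c < m)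
    (hm : x < speckerSeq H m + (1 / 2) ^ (c + 2)) : (∃ n, H n c = true) ↔ H m c = true := by
  refine ⟨fun ⟨n, hn⟩ => ?_, fun h => ⟨m, h⟩⟩
  by_contra hmc
  have hjump : speckerSeq H m + (1 / 2) ^ (c + 2) ≤ speckerSeq H (max m n) :=
    speckerSeq_add_le hH (le_max_left m n) hc (Bool.not_eq_true _ ▸ hmc)
      (hH c (le_max_right m n) hn)
  have hjump' : (speckerSeq H m : ℝ) + (1 / 2) ^ (c + 2) ≤ speckerSeq H (max m n) := by
    simpa using (Rat.cast_le (K := ℝ)).2 hjump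
  exact (hm.trans_le hjump').not_ge (hx ⟨_, rfl⟩)

theorem computablePred_of_isComputableReal_iSup_speckerSeq (hH : Computable₂ H)
    (hmono : ∀ c, Monotone (H · c)) (hL : IsComputableReal (⨆ n, (speckerSeq H n : ℝ))) :
    ComputablePred fun c => ∃ n, H n c = true := by
  have hlub := isLUB_iSup_speckerSeq (H := H)
  obtain ⟨N, hN, hlt⟩ := exists_computable_modulus (computable_speckerSeq hH) hlub hL
  let stage (c : ℕ) : ℕ := max (N (c + 2)) (c + 1)
  have hstage : Computable stage :=
    Primrec.nat_max.to_comp.comp (hN.comp (Computable.succ.comp .succ)) .succ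
  have hdecide : ComputablePred fun c => H (stage c) c = true :=
    ComputablePred.computable_iff.2 ⟨_, hH.comp hstage .id, rfl⟩
  refine hdecide.of_eq fun c => (exists_eq_true_iff_of_lt_speckerSeq_add hmono hlub.1
    (Nat.lt_of_succ_le (le_max_right _ _)) ((hlt (c + 2)).trans_le ?_)).symm
  gcongr
  exact (strictMono_speckerSeq hmono).monotone (le_max_left _ _)

end Specker

/-- Whether the program with code `c` halts on input `0` within `n` steps, in the sense of
`Nat.Partrec.Code.evaln`: the enumeration of the halting set by stages. -/
def haltsWithin (n c : ℕ) : Bool :=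
  (Code.evaln n (Denumerable.ofNat Code c) 0).isSome

theorem computable₂_haltsWithin : Computable₂ haltsWithin :=
  (Primrec.option_isSome.comp (Code.primrec_evaln.comp
    ((Primrec.fst.pair ((Primrec.ofNat _).comp .snd)).pair (.const 0)))).to_comp

theorem monotone_haltsWithin (c : ℕ) : Monotone (haltsWithin · c) := by
  intro m n hmn hm
  obtain ⟨x, hx⟩ := Option.isSome_iff_exists.1 hm
  exact Option.isSome_iff_exists.2 ⟨x, Code.evaln_mono hmn hx⟩

theorem exists_haltsWithin_encode_iff (c : Code) :
    (∃ n, haltsWithin n (encode c) = true) ↔ (c.eval 0).Dom := by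
  simp only [haltsWithin, Denumerable.ofNat_encode, Option.isSome_iff_exists, Part.dom_iff_mem,
    Code.evaln_complete, Option.mem_def]
  exact exists_comm

theorem not_isComputableReal_iSup_speckerSeq_haltsWithin :
    ¬ IsComputableReal (⨆ n, (speckerSeq haltsWithin n : ℝ)) := fun hL =>
  ComputablePred.halting_problem 0 <|
    (computablePred_comp (computablePred_of_isComputableReal_iSup_speckerSeq computable₂_haltsWithin
      monotone_haltsWithin hL) Computable.encode).of_eq exists_haltsWithin_encode_iff

/-- Specker's theorem: there is a computable, strictly increasing sequence of rationals in
`[0,1]` whose supremum (as a real number) cannot be approximated to precision `2^(-n)` by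
any computable sequence of rationals. -/
theorem exists_specker_sequence :
    ∃ s : ℕ → ℚ, Computable s ∧ StrictMono s ∧ (∀ n, 0 ≤ s n ∧ s n ≤ 1) ∧
      ∀ q : ℕ → ℚ, Computable q →
        ¬ ∀ n : ℕ, |(q n : ℝ) - (⨆ m, ((s m : ℝ)))| ≤ 2 ^ (-(n : ℤ)) := by
  refine ⟨speckerSeq haltsWithin, computable_speckerSeq computable₂_haltsWithin,
    strictMono_speckerSeq monotone_haltsWithin,
    fun n => ⟨speckerSeq_nonneg n, speckerSeq_le_one n⟩, fun q hq hL => ?_⟩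
  exact not_isComputableReal_iSup_speckerSeq_haltsWithin ⟨q, hq, hL⟩
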